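/- Let C be a conjugation on the complex Hilbert space K, and let S be a closed densely defined normal operator in K with C(D(S)) = D(S) and C(S(Cξ)) = Sξ for all ξ ∈ D(S); let E be the spectral measure of S on 𝔖 = σ(S). Let F assign to each A ∈ Bor_E(𝔖) a self-adjoint idempotent F(A) ∈ B(K) such that C∘F(A)∘C = F(A), F(∅) = 0, F(𝔖) = I, F(A ∩ B) = F(A)F(B) for all A, B ∈ Bor_E(𝔖), and the set functions A ↦ ⟨F(A)ξ, η⟩ are countably additive on Bor_E(𝔖) for all ξ, η ∈ K. Suppose in addition that for every A ∈ Bor_E(𝔖): (a) S(F(A)K ∩ D(S)) ⊆ F(A)K, and (b) the restriction of S to F(A)K, viewed as an operator in the Hilbert space F(A)K with domain F(A)K ∩ D(S), has spectrum contained in the closure [A]. Then F(A) = E(A) for every A ∈ Bor_E(𝔖). -/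

import Mathlib

open MeasureTheory
open scoped InnerProductSpace ComplexConjugate ENNReal

/-- A conjugation on a complex Hilbert space `K`. -/
structure IsConjugation {K : Type*} [NormedAddCommGroup K] [InnerProductSpace ℂ K]
    (C : K → K) : Prop where
  map_add : ∀ x y : K, C (x + y) = C x + C y
  map_smul : ∀ (a : ℂ) (x : K), C (a • x) = (conj a) • C x
  invol : ∀ x : K, C (C x) = x
  inner_map : ∀ x y : K, ⟪C x, C y⟫_ℂ = conj ⟪x, y⟫_ℂ

/-- A (projection-valued) spectral measure on the Borel subsets of the set `𝔖 ⊆ ℂ`,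
together with the family `μ` of its associated diagonal scalar measures
`μ ξ (A) = ⟨E(A)ξ, ξ⟩`. -/
structure IsSpectralMeasure {K : Type*} [NormedAddCommGroup K] [InnerProductSpace ℂ K]
    [CompleteSpace K] (𝔖 : Set ℂ) (E : Set ℂ → K →L[ℂ] K) (μ : K → Measure ℂ) : Prop where
  selfAdjoint : ∀ A : Set ℂ, MeasurableSet A → A ⊆ 𝔖 → IsSelfAdjoint (E A)
  empty : E ∅ = 0
  univ : E 𝔖 = 1
  inter : ∀ A B : Set ℂ, MeasurableSet A → MeasurableSet B → A ⊆ 𝔖 → B ⊆ 𝔖 →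
    E (A ∩ B) = E A ∘L E B
  countablyAdditive : ∀ (ξ η : K) (A : ℕ → Set ℂ), (∀ n, MeasurableSet (A n)) →
    (∀ n, A n ⊆ 𝔖) → Pairwise (Function.onFun Disjoint A) →
    HasSum (fun n => ⟪η, E (A n) ξ⟫_ℂ) ⟪η, E (⋃ n, A n) ξ⟫_ℂ
  measure_eq : ∀ (ξ : K) (A : Set ℂ), MeasurableSet A → A ⊆ 𝔖 →
    μ ξ A = ENNReal.ofReal (⟪ξ, E A ξ⟫_ℂ).re
  measure_compl : ∀ ξ : K, μ ξ 𝔖ᶜ = 0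

/-- The polarized integral `∫_𝔖 f dμ_{ξ,η}` of `f` against the complex measure
`μ_{ξ,η}(A) = ⟨E(A)ξ, η⟩`, expressed through the four diagonal (positive) measures. -/
noncomputable def specInt {K : Type*} [NormedAddCommGroup K] [InnerProductSpace ℂ K]
    (μ : K → Measure ℂ) (f : ℂ → ℂ) (ξ η : K) : ℂ :=
  (4 : ℂ)⁻¹ * (((∫ z, f z ∂(μ (ξ + η))) - ∫ z, f z ∂(μ (ξ - η)))
    + Complex.I * ((∫ z, f z ∂(μ (ξ + Complex.I • η))) - ∫ z, f z ∂(μ (ξ - Complex.I • η))))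

/-- The image `A^c = {conj z : z ∈ A}` of a subset of `ℂ` under complex conjugation. -/
def conjSet (A : Set ℂ) : Set ℂ := (fun z => conj z) '' A

/-- The point `z₀` lies in the resolvent set of the (possibly unbounded) operator `S`:
`z₀ − S : D(S) → K` is bijective with bounded everywhere-defined inverse. -/
def HasBoundedResolventAt {K : Type*} [NormedAddCommGroup K] [InnerProductSpace ℂ K]
    (S : K →ₗ.[ℂ] K) (z₀ : ℂ) : Prop :=
  ∃ R : K →L[ℂ] K, (∀ ξ : K, ∃ h : R ξ ∈ S.domain, z₀ • R ξ - S ⟨R ξ, h⟩ = ξ) ∧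
    (∀ ξ : S.domain, R (z₀ • (ξ : K) - S ξ) = ξ)

/-- The spectrum of a (possibly unbounded) operator `S` in `K`. -/
def pmapSpectrum {K : Type*} [NormedAddCommGroup K] [InnerProductSpace ℂ K]
    (S : K →ₗ.[ℂ] K) : Set ℂ :=
  {z₀ | ¬ HasBoundedResolventAt S z₀}

/-- A closed densely defined normal operator: `D(S*) = D(S)` and `‖Sξ‖ = ‖S*ξ‖` on the
common domain (equivalently `SS* = S*S` with equality of domains). -/
def IsNormalPMap {K : Type*} [NormedAddCommGroup K] [InnerProductSpace ℂ K] [CompleteSpace K]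
    (S : K →ₗ.[ℂ] K) : Prop :=
  Dense (S.domain : Set K) ∧ S.IsClosed ∧ S.adjoint.domain = S.domain ∧
    ∀ (ξ : K) (h1 : ξ ∈ S.domain) (h2 : ξ ∈ S.adjoint.domain),
      ‖S ⟨ξ, h1⟩‖ = ‖S.adjoint ⟨ξ, h2⟩‖

/-- The natural domain `D_f = {ξ : ∫ |f|² dμ_{ξ,ξ} < ∞}` of the operator `Ψ(f)`. -/
def specDomain {K : Type*} [NormedAddCommGroup K] [InnerProductSpace ℂ K]
    (μ : K → MeasureTheory.Measure ℂ) (f : ℂ → ℂ) : Set K :=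
  {ξ | ∫⁻ z, (‖f z‖₊ : ENNReal) ^ 2 ∂(μ ξ) < ⊤}


/-- The collection `Bor_E(𝔖)` of Borel subsets `A ⊆ 𝔖` with `C ∘ E(A) ∘ C = E(A)`. -/
def borE {K : Type*} [NormedAddCommGroup K] [InnerProductSpace ℂ K] [CompleteSpace K]
    (C : K → K) (𝔖 : Set ℂ) (E : Set ℂ → K →L[ℂ] K) : Set (Set ℂ) :=
  {A | MeasurableSet A ∧ A ⊆ 𝔖 ∧ ∀ ξ : K, C (E A (C ξ)) = E A ξ}

noncomputable section
namespace SpecAux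

/-- spectral resolution of `S`, indexed by all Borel subsets of `ℂ`. -/
structure Spec {K : Type*} [NormedAddCommGroup K] [InnerProductSpace ℂ K] [CompleteSpace K]
    (S : K →ₗ.[ℂ] K) (E : Set ℂ → K →L[ℂ] K) (μ : K → Measure ℂ) : Prop where
  sa : ∀ A : Set ℂ, MeasurableSet A → IsSelfAdjoint (E A)
  univ : E Set.univ = 1
  inter : ∀ A B : Set ℂ, MeasurableSet A → MeasurableSet B → E (A ∩ B) = E A ∘L E B
  add : ∀ (ξ η : K) (A : ℕ → Set ℂ), (∀ n, MeasurableSet (A n)) →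
    Pairwise (Function.onFun Disjoint A) →
    HasSum (fun n => ⟪η, E (A n) ξ⟫_ℂ) ⟪η, E (⋃ n, A n) ξ⟫_ℂ
  meas : ∀ (ξ : K) (A : Set ℂ), MeasurableSet A → μ ξ A = ENNReal.ofReal (⟪ξ, E A ξ⟫_ℂ).re
  dom : ∀ ξ : K, ξ ∈ S.domain ↔ ξ ∈ specDomain μ (fun z => z)
  form : ∀ ξ η : S.domain, ⟪(η : K), S ξ⟫_ℂ = specInt μ (fun z => z) ξ η
  dense : Dense (S.domain : Set K)

variable {K : Type*} [NormedAddCommGroup K] [InnerProductSpace ℂ K] [CompleteSpace K]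
  {S : K →ₗ.[ℂ] K} {E E' : Set ℂ → K →L[ℂ] K} {μ μ' : K → Measure ℂ}

lemma sa_inner {T : K →L[ℂ] K} (h : IsSelfAdjoint T) (x y : K) : ⟪T x, y⟫_ℂ = ⟪x, T y⟫_ℂ :=
  h.isSymmetric x y

lemma proj_re {T : K →L[ℂ] K} (h : IsSelfAdjoint T) (hi : ∀ x, T (T x) = T x) (x : K) :
    (⟪x, T x⟫_ℂ).re = ‖T x‖ ^ 2 := by
  rw [← hi x, ← sa_inner h, hi, ← inner_self_eq_norm_sq (𝕜 := ℂ)]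
  rfl

lemma proj_norm_le {T : K →L[ℂ] K} (h : IsSelfAdjoint T) (hi : ∀ x, T (T x) = T x) (x : K) :
    ‖T x‖ ≤ ‖x‖ := by
  have h1 := proj_re h hi x
  have h2 : (⟪x, T x⟫_ℂ).re ≤ ‖x‖ * ‖T x‖ := re_inner_le_norm (𝕜 := ℂ) x (T x)
  by_contra hlt
  push Not at hlt
  nlinarith [norm_nonneg x, norm_nonneg (T x)]

/-- if `‖T x‖ = ‖x‖` for a projection then `T x = x`. -/
lemma proj_fix {T : K →L[ℂ] K} (h : IsSelfAdjoint T) (hi : ∀ x, T (T x) = T x) {x : K}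
    (hx : ‖T x‖ ^ 2 = ‖x‖ ^ 2) : T x = x := by
  have h1 := proj_re h hi x
  have h2 : ‖x - T x‖ ^ 2 = 0 := by
    rw [@norm_sub_sq ℂ]
    have : RCLike.re ⟪x, T x⟫_ℂ = ‖T x‖ ^ 2 := h1
    rw [this]; linarith
  have := norm_eq_zero.1 (pow_eq_zero_iff (two_ne_zero) |>.1 h2)
  exact (sub_eq_zero.1 this).symm

/-- two projections with the same norms coincide -/
lemma proj_ext {T U : K →L[ℂ] K} (h : IsSelfAdjoint T) (hi : ∀ x, T (T x) = T x)
    (h' : IsSelfAdjoint U) (hi' : ∀ x, U (U x) = U x) (hx : ∀ x, ‖T x‖ ^ 2 = ‖U x‖ ^ 2) :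
    T = U := by
  have h1 : ∀ x, T (U x) = U x := fun x => proj_fix h hi (by rw [hx, hi'])
  have h2 : ∀ x, U (T x) = T x := fun x => proj_fix h' hi' (by rw [← hx, hi])
  ext x
  refine ext_inner_left ℂ fun v => ?_
  rw [← h2 x, ← sa_inner h', ← sa_inner h, h1, sa_inner h']

namespace Spec

lemma idem (h : Spec S E μ) {A : Set ℂ} (hA : MeasurableSet A) (x : K) : E A (E A x) = E A x := by
  have := h.inter A A hA hA
  rw [Set.inter_self] at this
  conv_rhs => rw [this]
  rfl

lemma comm (h : Spec S E μ) {A B : Set ℂ} (hA : MeasurableSet A) (hB : MeasurableSet B) (x : K) :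
    E A (E B x) = E B (E A x) := by
  have h1 := h.inter A B hA hB
  have h2 := h.inter B A hB hA
  rw [Set.inter_comm, h1] at h2
  exact congrArg (fun T : K →L[ℂ] K => T x) h2

lemma mu_eq (h : Spec S E μ) {A : Set ℂ} (hA : MeasurableSet A) (x : K) :
    μ x A = ENNReal.ofReal (‖E A x‖ ^ 2) := by
  rw [h.meas x A hA, proj_re (h.sa A hA) (h.idem hA)]

lemma mu_univ (h : Spec S E μ) (x : K) : μ x Set.univ = ENNReal.ofReal (‖x‖ ^ 2) := by
  rw [h.mu_eq MeasurableSet.univ, h.univ]; rfl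

lemma fin (h : Spec S E μ) (x : K) : IsFiniteMeasure (μ x) :=
  ⟨by rw [h.mu_univ]; exact ENNReal.ofReal_lt_top⟩

lemma mu_proj (h : Spec S E μ) {B : Set ℂ} (hB : MeasurableSet B) (x : K) :
    μ (E B x) = (μ x).restrict B := by
  ext A hA
  rw [Measure.restrict_apply hA, h.mu_eq hA, h.mu_eq (hA.inter hB), h.inter A B hA hB]
  rfl

lemma proj_dom (h : Spec S E μ) {B : Set ℂ} (hB : MeasurableSet B) {x : K} (hx : x ∈ S.domain) :
    E B x ∈ S.domain := by
  rw [h.dom] at hx ⊢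
  unfold specDomain at *
  simp only [Set.mem_ofPred_eq] at *
  rw [h.mu_proj hB]
  exact (lintegral_mono' Measure.restrict_le_self le_rfl).trans_lt hx

lemma proj_dom_bdd (h : Spec S E μ) {B : Set ℂ} (hB : MeasurableSet B) {z : ℂ} {r : ℝ}
    (hBr : B ⊆ Metric.closedBall z r) (x : K) : E B x ∈ S.domain := by
  rw [h.dom]
  unfold specDomain
  simp only [Set.mem_ofPred_eq]
  rw [h.mu_proj hB]
  have := h.fin x
  have hle : ∫⁻ w in B, (‖w‖₊ : ENNReal) ^ 2 ∂(μ x) ≤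
      ∫⁻ w in B, (ENNReal.ofReal ((‖z‖ + r) ^ 2)) ∂(μ x) := by
    refine setLIntegral_mono' hB fun w hw => ?_
    have hw' := hBr hw
    rw [Metric.mem_closedBall, dist_eq_norm] at hw'
    have : ‖w‖ ≤ ‖z‖ + r := by
      have := norm_add_le (w - z) z
      rw [sub_add_cancel] at this; linarith
    rw [← ENNReal.ofReal_coe_nnreal, coe_nnnorm, ← ENNReal.ofReal_pow (norm_nonneg _)]
    exact ENNReal.ofReal_le_ofReal (by gcongr)
  refine hle.trans_lt ?_
  rw [setLIntegral_const]
  exact ENNReal.mul_lt_top ENNReal.ofReal_lt_top (measure_lt_top _ _)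

lemma mu_orth (h : Spec S E μ) {B : Set ℂ} (hB : MeasurableSet B) {x y : K}
    (hx : E B x = x) (hy : E B y = 0) (u : ℂ) (hu : ‖u‖ = 1) :
    μ (x + u • y) = μ (x + y) := by
  ext A hA
  have key : ∀ v : ℂ, ‖v‖ = 1 → ‖E A (x + v • y)‖ ^ 2 = ‖E A x‖ ^ 2 + ‖E A y‖ ^ 2 := by
    intro v hv
    have h0 : ⟪E A x, E A (v • y)⟫_ℂ = 0 := by
      rw [← hx, h.comm hA hB, sa_inner (h.sa B hB), map_smul, map_smul, h.comm hB hA, hy]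
      simp
    rw [map_add, @norm_add_sq ℂ, h0, map_smul, norm_smul, hv]
    simp
  rw [h.mu_eq hA, h.mu_eq hA, key u hu]
  have := key 1 (by simp)
  rw [one_smul] at this
  rw [this]

lemma S_orth (h : Spec S E μ) {B : Set ℂ} (hB : MeasurableSet B) {x y : S.domain}
    (hx : E B x = x) (hy : E B y = 0) : ⟪(y : K), S x⟫_ℂ = 0 ∧ ⟪(x : K), S y⟫_ℂ = 0 := by
  have e1 : μ ((x : K) - y) = μ ((x : K) + y) := by
    have := h.mu_orth hB hx hy (-1) (by simp)
    rwa [neg_one_smul, ← sub_eq_add_neg] at this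
  have e2 := h.mu_orth hB hx hy Complex.I (by simp)
  have e3 : μ ((x : K) - Complex.I • (y : K)) = μ ((x : K) + y) := by
    have := h.mu_orth hB hx hy (-Complex.I) (by simp)
    rwa [neg_smul, ← sub_eq_add_neg] at this
  have n : ∀ v : K, μ (-v) = μ v := by
    intro v; ext A hA; rw [h.mu_eq hA, h.mu_eq hA, map_neg, norm_neg]
  have n2 : ∀ v : K, μ (Complex.I • v) = μ v := by
    intro v; ext A hA; rw [h.mu_eq hA, h.mu_eq hA, map_smul, norm_smul]; simp
  refine ⟨?_, ?_⟩
  · rw [h.form, specInt, e1, e2, e3]; simp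
  · have f1 : μ ((y : K) + x) = μ ((x : K) + y) := by rw [add_comm]
    have f2 : μ ((y : K) - x) = μ ((x : K) + y) := by rw [← neg_sub, n, e1]
    have f3 : μ ((y : K) + Complex.I • (x : K)) = μ ((x : K) + y) := by
      have : (y : K) + Complex.I • (x : K) = Complex.I • ((x : K) - Complex.I • (y : K)) := by
        rw [smul_sub, smul_smul, Complex.I_mul_I]; module
      rw [this, n2, e3]
    have f4 : μ ((y : K) - Complex.I • (x : K)) = μ ((x : K) + y) := by
      have : (y : K) - Complex.I • (x : K) = -(Complex.I • ((x : K) + Complex.I • (y : K))) := by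
        rw [smul_add, smul_smul, Complex.I_mul_I]; module
      rw [this, n, n2, e2]
    rw [h.form, specInt, f1, f2, f3, f4]; simp

lemma S_comm (h : Spec S E μ) {B : Set ℂ} (hB : MeasurableSet B) (x : S.domain) :
    E B (S x) = S ⟨E B x, h.proj_dom hB x.2⟩ := by
  set p : S.domain := ⟨E B x, h.proj_dom hB x.2⟩ with hp
  set q : S.domain := x - p with hq
  have hpx : E B (p : K) = p := h.idem hB _
  have hqx : E B (q : K) = 0 := by
    simp [hq, hp, h.idem hB]
  have hxpq : S x = S p + S q := by
    rw [← LinearPMap.map_add]; congr 1; rw [hq]; abel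
  -- `S p` lies in the range and `E B (S q) = 0`
  have a1 : E B (S q) = 0 := by
    refine h.dense.eq_zero_of_inner_right ℂ fun v hv => ?_
    rw [← sa_inner (h.sa B hB)]
    exact (h.S_orth hB (x := ⟨E B v, h.proj_dom hB hv⟩) (y := q) (h.idem hB _) hqx).2
  have a2 : E B (S p) = S p := by
    rw [← sub_eq_zero]
    refine h.dense.eq_zero_of_inner_right ℂ fun v hv => ?_
    have hd : E B v - v ∈ S.domain := S.domain.sub_mem (h.proj_dom hB hv) hv
    have := (h.S_orth hB (x := p) (y := ⟨E B v - v, hd⟩) hpx (by simp [h.idem hB])).1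
    rw [inner_sub_right, ← sa_inner (h.sa B hB), ← inner_sub_left]
    exact this
  rw [hxpq, map_add, a1, a2, add_zero]

end Spec
end SpecAux
end
noncomputable section
namespace SpecAux
open Filter Topology
variable {K : Type*} [NormedAddCommGroup K] [InnerProductSpace ℂ K] [CompleteSpace K]
  {S : K →ₗ.[ℂ] K} {E E' : Set ℂ → K →L[ℂ] K} {μ μ' : K → Measure ℂ}
namespace Spec

lemma int_bound (h : Spec S E μ) {B : Set ℂ} (hB : MeasurableSet B) {z : ℂ} {r : ℝ}
    (hBr : B ⊆ Metric.closedBall z r) {x : K} (hx : E B x = x) :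
    ‖z * ((‖x‖ : ℂ) ^ 2) - ∫ w, w ∂(μ x)‖ ≤ r * ‖x‖ ^ 2 := by
  have := h.fin x
  have hm : (μ x).real Set.univ = ‖x‖ ^ 2 := by
    rw [Measure.real, h.mu_univ, ENNReal.toReal_ofReal (by positivity)]
  have hae : ∀ᵐ w ∂(μ x), ‖z - w‖ ≤ r := by
    rw [← hx, h.mu_proj hB]
    filter_upwards [ae_restrict_mem hB] with w hw
    have := hBr hw
    rwa [Metric.mem_closedBall, dist_comm, dist_eq_norm] at this
  have hint : Integrable (fun w : ℂ => w) (μ x) := by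
    refine Integrable.of_bound (by fun_prop) (‖z‖ + r) ?_
    filter_upwards [hae] with w hw
    have := norm_sub_le z (z - w)
    rw [sub_sub_cancel] at this; linarith
  have e : z * ((‖x‖ : ℂ) ^ 2) - ∫ w, w ∂(μ x) = ∫ w, (z - w) ∂(μ x) := by
    rw [integral_sub (integrable_const _) hint, integral_const, hm, mul_comm]
    simp
  rw [e, ← hm]
  exact norm_integral_le_of_norm_le_const hae

lemma polar (x y : K) : ⟪y, x⟫_ℂ = (4 : ℂ)⁻¹ * ((((‖x + y‖ : ℂ) ^ 2) - ((‖x - y‖ : ℂ) ^ 2))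
    + Complex.I * (((‖x + Complex.I • y‖ : ℂ) ^ 2) - ((‖x - Complex.I • y‖ : ℂ) ^ 2))) := by
  simp only [← inner_self_eq_norm_sq_to_K (𝕜 := ℂ), ← Complex.coe_algebraMap]
  simp only [inner_add_left, inner_add_right, inner_sub_left, inner_sub_right,
    inner_smul_left, inner_smul_right, Complex.conj_I]
  linear_combination (-(1/2) * ⟪x, y⟫_ℂ + (1/2) * ⟪y, x⟫_ℂ) * Complex.I_sq

lemma form_bound (h : Spec S E μ) {B : Set ℂ} (hB : MeasurableSet B) {z : ℂ} {r : ℝ}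
    (hBr : B ⊆ Metric.closedBall z r) {x y : S.domain} (hx : E B x = x) (hy : E B y = y) :
    ‖⟪(y : K), z • (x : K) - S x⟫_ℂ‖ ≤ r * (‖(x : K)‖ ^ 2 + ‖(y : K)‖ ^ 2) := by
  rw [inner_sub_right, inner_smul_right, polar, h.form, specInt]
  have b1 := h.int_bound hB hBr (x := (x : K) + y) (by simp [hx, hy])
  have b2 := h.int_bound hB hBr (x := (x : K) - y) (by simp [hx, hy])
  have b3 := h.int_bound hB hBr (x := (x : K) + Complex.I • (y : K)) (by simp [hx, hy])
  have b4 := h.int_bound hB hBr (x := (x : K) - Complex.I • (y : K)) (by simp [hx, hy])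
  have p1 := parallelogram_law_with_norm ℂ (x : K) y
  have p2 := parallelogram_law_with_norm ℂ (x : K) (Complex.I • (y : K))
  rw [norm_smul, Complex.norm_I, one_mul] at p2
  set D1 := z * ((‖(x : K) + y‖ : ℂ) ^ 2) - ∫ w, w ∂(μ ((x : K) + y)) with hD1
  set D2 := z * ((‖(x : K) - y‖ : ℂ) ^ 2) - ∫ w, w ∂(μ ((x : K) - y)) with hD2
  set D3 := z * ((‖(x : K) + Complex.I • (y : K)‖ : ℂ) ^ 2)
    - ∫ w, w ∂(μ ((x : K) + Complex.I • (y : K))) with hD3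
  set D4 := z * ((‖(x : K) - Complex.I • (y : K)‖ : ℂ) ^ 2)
    - ∫ w, w ∂(μ ((x : K) - Complex.I • (y : K))) with hD4
  have key : ‖(4 : ℂ)⁻¹ * ((D1 - D2) + Complex.I * (D3 - D4))‖
      ≤ 4⁻¹ * ((‖D1‖ + ‖D2‖) + (‖D3‖ + ‖D4‖)) := by
    rw [norm_mul]
    have : ‖(4 : ℂ)⁻¹‖ = 4⁻¹ := by simp
    rw [this]
    gcongr
    refine (norm_add_le _ _).trans (add_le_add (norm_sub_le _ _) ?_)
    rw [norm_mul, Complex.norm_I, one_mul]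
    exact norm_sub_le _ _
  refine le_trans (le_of_eq ?_) (key.trans ?_)
  · congr 1
    rw [hD1, hD2, hD3, hD4]; ring
  · have q1 := congrArg (fun t => r * t) p1
    have q2 := congrArg (fun t => r * t) p2
    simp only [mul_add] at q1 q2
    linarith

lemma norm_bound (h : Spec S E μ) {B : Set ℂ} (hB : MeasurableSet B) {z : ℂ} {r : ℝ} (hr : 0 < r)
    (hBr : B ⊆ Metric.closedBall z r) {x : S.domain} (hx : E B x = x) :
    ‖z • (x : K) - S x‖ ≤ 2 * r * ‖(x : K)‖ := by
  set v := z • (x : K) - S x with hv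
  have hEv : E B v = v := by
    rw [hv, map_sub, map_smul, h.S_comm hB]
    congr 2
    exact Subtype.ext hx
  have hvd : v ∈ S.domain := by rw [← hEv]; exact h.proj_dom_bdd hB hBr v
  have ht : ((1 / (2 * r) : ℝ) : ℂ) • v ∈ S.domain := S.domain.smul_mem _ hvd
  have := h.form_bound hB hBr (x := x) (y := ⟨((1 / (2 * r) : ℝ) : ℂ) • v, ht⟩) hx (by simp [hEv])
  simp only [← hv] at this
  rw [inner_smul_left, norm_mul, norm_smul, inner_self_eq_norm_sq_to_K] at this
  simp only [Complex.conj_ofReal, Complex.norm_real, norm_pow] at this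
  rw [Real.norm_of_nonneg (by positivity : (0:ℝ) ≤ 1 / (2 * r))] at this
  have t2 : ‖((‖v‖ : ℝ) : ℂ)‖ = ‖v‖ := by simp
  have this' : 1 / (2 * r) * ‖v‖ ^ 2 ≤ r * (‖(x : K)‖ ^ 2 + (1 / (2 * r) * ‖v‖) ^ 2) := by
    simpa using this
  have e : r * (1 / (2 * r) * ‖v‖) ^ 2 = 1 / (2 * r) * ‖v‖ ^ 2 / 2 := by field_simp
  have k : 1 / (2 * r) * ‖v‖ ^ 2 / 2 ≤ r * ‖(x : K)‖ ^ 2 := by nlinarith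
  have k2 : ‖v‖ ^ 2 ≤ (2 * r * ‖(x : K)‖) ^ 2 := by
    have : ‖v‖ ^ 2 = (1 / (2 * r) * ‖v‖ ^ 2 / 2) * (4 * r) := by field_simp; norm_num
    rw [this]
    nlinarith [mul_le_mul_of_nonneg_right k (by positivity : 0 ≤ 4 * r)]
  exact le_of_sq_le_sq k2 (by positivity)

lemma res_bound (h : Spec S E μ) {B : Set ℂ} (hB : MeasurableSet B) {z : ℂ} {r : ℝ} (hr : 0 < r)
    (hBr : B ⊆ Metric.closedBall z r) (f : S.domain) :
    ‖E B (z • (f : K) - S f)‖ ≤ 2 * r * ‖E B f‖ := by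
  rw [map_sub, map_smul, h.S_comm hB]
  exact h.norm_bound hB hr hBr (x := ⟨E B f, h.proj_dom hB f.2⟩) (h.idem hB _)

lemma proj_eq_of_null (h : Spec S E μ) {s : Set ℂ} (hs : MeasurableSet s) {x : K}
    (h0 : μ x sᶜ = 0) : E s x = x := by
  refine proj_fix (h.sa s hs) (h.idem hs) ?_
  have h1 : μ x s = μ x Set.univ := by
    rw [← measure_add_measure_compl hs, h0, add_zero]
  rw [h.mu_univ, h.mu_eq hs] at h1
  exact (ENNReal.ofReal_eq_ofReal_iff (by positivity) (by positivity)).1 h1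

lemma ball_bound (h : Spec S E μ) {z : ℂ} {x : K} (f : S.domain) (hf : z • (f : K) - S f = x)
    {r : ℝ} (hr : 0 < r) : μ x (Metric.closedBall z r) ≤
      volume (Metric.closedBall z r) * (2 * μ f (Metric.closedBall z r \ {z})) := by
  have m1 : MeasurableSet ({z} : Set ℂ) := measurableSet_singleton z
  have mb : MeasurableSet (Metric.closedBall z r) := Metric.isClosed_closedBall.measurableSet
  have h0 : μ x {z} = 0 := by
    have : E {z} x = 0 := by
      rw [← norm_le_zero_iff]
      refine le_of_forall_pos_le_add fun ε hε => ?_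
      have hpos : 0 < ε / (2 * (‖E {z} (f : K)‖ + 1)) := by positivity
      have := h.res_bound m1 hpos (z := z) (by simp [hpos.le]) f
      rw [hf] at this
      refine this.trans ?_
      have e : 2 * (ε / (2 * (‖E {z} (f : K)‖ + 1))) * ‖E {z} (f : K)‖
        = ε * (‖E {z} (f : K)‖ / (‖E {z} (f : K)‖ + 1)) := by field_simp
      rw [e, zero_add]
      refine mul_le_of_le_one_right hε.le ?_
      rw [div_le_one (by positivity)]; linarith
    rw [h.mu_eq m1, this]; simp
  have h1 : μ x (Metric.closedBall z r) = μ x (Metric.closedBall z r \ {z}) :=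
    (measure_sdiff_null h0).symm
  rw [h1, h.mu_eq (mb.diff m1), h.mu_eq (mb.diff m1), Complex.volume_closedBall]
  have hb := h.res_bound (mb.diff m1) hr Set.sdiff_subset f
  rw [hf] at hb
  have e2 : (2 : ℝ≥0∞) = ENNReal.ofReal 2 := by simp
  have e3 : (NNReal.pi : ℝ≥0∞) = ENNReal.ofReal Real.pi := by
    rw [← NNReal.coe_real_pi, ENNReal.ofReal_coe_nnreal]
  rw [e2, e3, ← ENNReal.ofReal_pow hr.le, ← ENNReal.ofReal_mul (by positivity),
    ← ENNReal.ofReal_mul (by positivity), ← ENNReal.ofReal_mul (by positivity)]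
  refine ENNReal.ofReal_le_ofReal ?_
  set a := ‖E (Metric.closedBall z r \ {z}) x‖
  set b := ‖E (Metric.closedBall z r \ {z}) (f : K)‖
  have ha : 0 ≤ a := norm_nonneg _
  have : a ^ 2 ≤ (2 * r * b) ^ 2 := pow_le_pow_left₀ ha hb 2
  have hpi := Real.two_le_pi
  have : 0 ≤ r ^ 2 * b ^ 2 := by positivity
  nlinarith

/-- Putnam-type theorem: local spectral inclusion from pointwise solvability. -/
lemma local_spec (h : Spec S E μ) {s : Set ℂ} (hs : IsClosed s) {x : K}
    (hx : ∀ z ∉ s, ∃ f : S.domain, z • (f : K) - S f = x) : E s x = x := by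
  refine h.proj_eq_of_null hs.measurableSet ?_
  have := h.fin x
  have hae := Besicovitch.ae_tendsto_rnDeriv (volume : Measure ℂ) (μ x)
  have hlt := Measure.rnDeriv_lt_top (volume : Measure ℂ) (μ x)
  have : ∀ᵐ z ∂(μ x), z ∈ s := by
    filter_upwards [hae, hlt] with z hz hzt
    by_contra hzs
    obtain ⟨f, hf⟩ := hx z hzs
    have := h.fin (f : K)
    have t0 : Tendsto (fun r => μ (f : K) (Metric.closedBall z r \ {z})) (𝓝[>] (0:ℝ)) (𝓝 0) := by
      have := tendsto_measure_biInter_gt (μ := μ (f : K))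
        (s := fun r : ℝ => Metric.closedBall z r \ {z}) (a := 0)
        (fun r _ => (Metric.isClosed_closedBall.measurableSet.diff
          (measurableSet_singleton z)).nullMeasurableSet)
        (fun i j _ hij => Set.sdiff_subset_sdiff_left (Metric.closedBall_subset_closedBall hij))
        ⟨1, one_pos, measure_ne_top _ _⟩
      have e : (⋂ r > (0:ℝ), Metric.closedBall z r \ {z}) = ∅ := by
        ext w
        simp only [Set.mem_iInter, Set.mem_sdiff, Set.mem_singleton_iff, Set.mem_empty_iff_false,
          iff_false, not_forall]
        by_cases hw : w = z
        · exact ⟨1, one_pos, fun hh => hh.2 hw⟩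
        · have : 0 < dist w z := dist_pos.2 hw
          refine ⟨dist w z / 2, by positivity, fun hh => ?_⟩
          have := hh.1
          rw [Metric.mem_closedBall] at this
          linarith
      rw [e, measure_empty] at this
      exact this
    have t1 : Tendsto (fun r => (2 * μ (f : K) (Metric.closedBall z r \ {z}))⁻¹)
        (𝓝[>] (0:ℝ)) (𝓝 ⊤) := by
      have := ENNReal.Tendsto.const_mul (a := 2) t0 (Or.inr (by simp))
      rw [mul_zero] at this
      have := tendsto_inv_iff.2 this |>.congr (fun _ => rfl)
      simpa using this
    have t2 : Tendsto (fun r => volume (Metric.closedBall z r) / μ x (Metric.closedBall z r))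
        (𝓝[>] (0:ℝ)) (𝓝 ⊤) := by
      refine tendsto_nhds_top_mono t1 ?_
      filter_upwards [self_mem_nhdsWithin] with r hr
      have hr : 0 < r := hr
      have hb := h.ball_bound f hf hr
      have v0 : volume (Metric.closedBall z r) ≠ 0 :=
        (Metric.measure_closedBall_pos volume z hr).ne'
      have vt : volume (Metric.closedBall z r) ≠ ⊤ := measure_closedBall_lt_top.ne
      rw [ENNReal.le_div_iff_mul_le (Or.inr v0) (Or.inr vt)]
      calc _ ≤ (2 * μ (f : K) (Metric.closedBall z r \ {z}))⁻¹ *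
            (volume (Metric.closedBall z r) * (2 * μ f (Metric.closedBall z r \ {z}))) := by gcongr
        _ = volume (Metric.closedBall z r) * ((2 * μ (f : K) (Metric.closedBall z r \ {z}))⁻¹ *
            (2 * μ f (Metric.closedBall z r \ {z}))) := by ring
        _ ≤ volume (Metric.closedBall z r) * 1 := by
            gcongr
            rw [mul_comm]
            exact ENNReal.mul_inv_le_one _
        _ = _ := mul_one _
    exact hzt.ne (tendsto_nhds_unique hz t2)
  exact this

lemma sylvester (h : Spec S E μ) (h' : Spec S E' μ') {A B : Set ℂ} (hA : MeasurableSet A)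
    (hB : MeasurableSet B) {a b : ℂ} {r : ℝ} (hr : 0 < r) (hAr : A ⊆ Metric.closedBall a r)
    (hBr : B ⊆ Metric.closedBall b r) (hd : 4 * r < dist a b) (x : K) : E A (E' B x) = 0 := by
  set T : K →L[ℂ] K := E A ∘L E' B with hT
  have hd0 : 0 < dist a b := by linarith
  have key : ∀ y, ‖T y‖ ≤ (4 * r / dist a b * ‖T‖) * ‖y‖ := by
    intro y
    set p : S.domain := ⟨E' B y, h'.proj_dom_bdd hB hBr y⟩ with hp
    have hpy : ‖(p : K)‖ ≤ ‖y‖ := proj_norm_le (h'.sa B hB) (h'.idem hB) y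
    have b1 := h.res_bound hA hr hAr p
    have b2 := h'.norm_bound hB hr hBr (x := p) (h'.idem hB y)
    have e2 : E A (b • (p : K) - S p) = T (b • (p : K) - S p) := by
      rw [hT]
      simp only [ContinuousLinearMap.comp_apply]
      congr 1
      rw [map_sub, map_smul, h'.S_comm hB]
      have : E' B (p : K) = p := h'.idem hB y
      congr 2
      · exact this.symm
      · exact Subtype.ext this.symm
    have e3 : E A (p : K) = T y := rfl
    have e4 : (a - b) • T y = E A (a • (p : K) - S p) - E A (b • (p : K) - S p) := by
      rw [← map_sub, ← e3, ← map_smul]; congr 1; module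
    have n1 : ‖T (b • (p : K) - S p)‖ ≤ ‖T‖ * (2 * r * ‖y‖) := by
      refine (T.le_opNorm _).trans ?_
      have : 2 * r * ‖(p : K)‖ ≤ 2 * r * ‖y‖ := by gcongr
      gcongr
      linarith
    have n2 : ‖E A (a • (p : K) - S p)‖ ≤ ‖T‖ * (2 * r * ‖y‖) := by
      refine b1.trans ?_
      rw [e3]
      have := T.le_opNorm y
      nlinarith
    have n3 : dist a b * ‖T y‖ ≤ ‖T‖ * (2 * r * ‖y‖) + ‖T‖ * (2 * r * ‖y‖) := by
      rw [dist_eq_norm, ← norm_smul, e4]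
      refine (norm_sub_le _ _).trans (add_le_add n2 ?_)
      rw [e2]; exact n1
    rw [← mul_le_mul_iff_right₀ hd0]
    refine n3.trans (le_of_eq ?_)
    field_simp
    ring
  have hle := T.opNorm_le_bound (by positivity) key
  have hlt : 4 * r / dist a b < 1 := by rw [div_lt_one hd0]; exact hd
  have : ‖T‖ = 0 := by
    by_contra hne
    have hpos : 0 < ‖T‖ := lt_of_le_of_ne (norm_nonneg _) (Ne.symm hne)
    nlinarith
  have : T = 0 := norm_eq_zero.1 this
  exact congrArg (fun U : K →L[ℂ] K => U x) this

lemma empty (h : Spec S E μ) : E ∅ = 0 := by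
  ext x
  have := h.mu_eq MeasurableSet.empty x
  rw [measure_empty] at this
  have := ENNReal.ofReal_eq_zero.1 this.symm
  have : ‖E ∅ x‖ = 0 := by
    have := le_antisymm this (by positivity)
    exact pow_eq_zero_iff two_ne_zero |>.1 this
  simpa using this

lemma closed_le (h : Spec S E μ) (h' : Spec S E' μ') {s : Set ℂ} (hs : IsClosed s) (x : K) :
    E s (E' s x) = E' s x := by
  refine h.proj_eq_of_null hs.measurableSet ?_
  refine measure_null_of_locally_null _ fun z hz => ?_
  obtain ⟨ε, hε, hball⟩ := Metric.isOpen_iff.1 hs.isOpen_compl z hz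
  have hr : 0 < ε / 8 := by positivity
  set r := ε / 8 with hrd
  refine ⟨Metric.closedBall z r, mem_nhdsWithin_of_mem_nhds (Metric.closedBall_mem_nhds z hr), ?_⟩
  have mz : MeasurableSet (Metric.closedBall z r) := Metric.isClosed_closedBall.measurableSet
  suffices h0 : E (Metric.closedBall z r) (E' s x) = 0 by rw [h.mu_eq mz, h0]; simp
  set d := TopologicalSpace.denseSeq ℂ
  set D : ℕ → Set ℂ := disjointed fun n => Metric.closedBall (d n) r
  have mD : ∀ n, MeasurableSet (D n) :=
    MeasurableSet.disjointed fun n => Metric.isClosed_closedBall.measurableSet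
  have uD : ⋃ n, (D n ∩ s) = s := by
    rw [← Set.iUnion_inter, iUnion_disjointed]
    have : (⋃ n, Metric.closedBall (d n) r) = Set.univ := by
      rw [Set.eq_univ_iff_forall]
      intro w
      obtain ⟨n, hn⟩ := (TopologicalSpace.denseRange_denseSeq ℂ).exists_dist_lt w hr
      exact Set.mem_iUnion.2 ⟨n, hn.le⟩
    rw [this, Set.univ_inter]
  have hpw : Pairwise (Function.onFun Disjoint fun n => D n ∩ s) := fun i j hij =>
    (disjoint_disjointed _ hij).mono Set.inter_subset_left Set.inter_subset_left
  have hz0 : ∀ n, E (Metric.closedBall z r) (E' (D n ∩ s) x) = 0 := by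
    intro n
    have hsub : D n ⊆ Metric.closedBall (d n) r := disjointed_subset _ n
    by_cases hdist : 4 * r < dist z (d n)
    · exact h.sylvester h' mz ((mD n).inter hs.measurableSet) hr le_rfl
        (Set.inter_subset_left.trans hsub) hdist x
    · have : D n ∩ s = ∅ := by
        rw [Set.eq_empty_iff_forall_notMem]
        rintro w ⟨hw, hws⟩
        refine hball ?_ hws
        have := hsub hw
        rw [Metric.mem_closedBall] at this
        rw [Metric.mem_ball]
        have := dist_triangle w (d n) z
        rw [dist_comm (d n) z] at this
        linarith
      rw [this, h'.empty]; simp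
  refine ext_inner_left ℂ fun v => ?_
  have hsum := h'.add x (E (Metric.closedBall z r) v) (fun n => D n ∩ s)
    (fun n => (mD n).inter hs.measurableSet) hpw
  rw [uD] at hsum
  simp only [sa_inner (h.sa _ mz), hz0, inner_zero_right] at hsum
  rw [inner_zero_right]
  exact hsum.unique hasSum_zero

lemma uniq (h : Spec S E μ) (h' : Spec S E' μ') {A : Set ℂ} (hA : MeasurableSet A) :
    E A = E' A := by
  have hc : ∀ s, IsClosed s → E s = E' s := by
    intro s hs
    have m := hs.measurableSet
    ext x
    refine ext_inner_left ℂ fun v => ?_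
    rw [← h'.closed_le h hs, ← sa_inner (h'.sa _ m), ← sa_inner (h.sa _ m), h.closed_le h' hs,
      sa_inner (h'.sa _ m)]
  have hm : ∀ x, μ x = μ' x := by
    intro x
    have := h.fin x
    refine ext_of_generate_finite {s | IsClosed s} ?_ isPiSystem_isClosed ?_ ?_
    · rw [← borel_eq_generateFrom_isClosed]; exact BorelSpace.measurable_eq
    · intro s hs
      have hs : IsClosed s := hs
      rw [h.mu_eq hs.measurableSet, h'.mu_eq hs.measurableSet, hc s hs]
    · rw [h.mu_univ, h'.mu_univ]
  refine proj_ext (h.sa A hA) (h.idem hA) (h'.sa A hA) (h'.idem hA) fun x => ?_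
  have := h.mu_eq hA x
  rw [hm, h'.mu_eq hA] at this
  exact ((ENNReal.ofReal_eq_ofReal_iff (by positivity) (by positivity)).1 this).symm

end Spec
end SpecAux
end
noncomputable section
namespace SpecAux
open Filter Topology
variable {K : Type*} [NormedAddCommGroup K] [InnerProductSpace ℂ K] [CompleteSpace K]
  {S : K →ₗ.[ℂ] K} {E E' : Set ℂ → K →L[ℂ] K} {μ μ' : K → Measure ℂ}

lemma exists_measure (G : Set ℂ → K →L[ℂ] K) (sa : ∀ s, MeasurableSet s → IsSelfAdjoint (G s))
    (idem : ∀ s, MeasurableSet s → ∀ x, G s (G s x) = G s x) (h0 : G ∅ = 0)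
    (hadd : ∀ (ξ η : K) (A : ℕ → Set ℂ), (∀ n, MeasurableSet (A n)) →
      Pairwise (Function.onFun Disjoint A) →
      HasSum (fun n => ⟪η, G (A n) ξ⟫_ℂ) ⟪η, G (⋃ n, A n) ξ⟫_ℂ) (x : K) :
    ∃ ν : Measure ℂ, ∀ s, MeasurableSet s → ν s = ENNReal.ofReal (‖G s x‖ ^ 2) := by
  refine ⟨Measure.ofMeasurable (fun s _ => ENNReal.ofReal (‖G s x‖ ^ 2)) (by simp [h0]) ?_,
    fun s hs => Measure.ofMeasurable_apply s hs⟩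
  intro f hf hd
  have h1 := Complex.hasSum_re (hadd x x f hf hd)
  simp only [proj_re (sa _ (hf _)) (idem _ (hf _)),
    proj_re (sa _ (MeasurableSet.iUnion hf)) (idem _ (MeasurableSet.iUnion hf))] at h1
  rw [← h1.tsum_eq]
  exact ENNReal.ofReal_tsum_of_nonneg (fun n => by positivity) h1.summable

lemma isOpen_resolvent (S : K →ₗ.[ℂ] K) : IsClosed (pmapSpectrum S) := by
  rw [← isOpen_compl_iff, Metric.isOpen_iff]
  intro z hz
  have hz : HasBoundedResolventAt S z := not_not.1 hz
  obtain ⟨R, hR1, hR2⟩ := hz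
  refine ⟨(‖R‖ + 1)⁻¹, by positivity, fun w hw => not_not.2 ?_⟩
  rw [Metric.mem_ball, dist_eq_norm] at hw
  have hlt : ‖-((w - z) • R)‖ < 1 := by
    rw [norm_neg, norm_smul]
    calc ‖w - z‖ * ‖R‖ ≤ (‖R‖ + 1)⁻¹ * ‖R‖ := by gcongr
      _ < 1 := by
        rw [inv_mul_lt_iff₀ (by positivity)]; linarith
  obtain ⟨u, hu⟩ := isUnit_one_sub_of_norm_lt_one hlt
  have hu1 : ∀ x, (u : K →L[ℂ] K) x = x + (w - z) • R x := by
    intro x; rw [hu]; simp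
  set V : K →L[ℂ] K := ((u⁻¹ : (K →L[ℂ] K)ˣ) : K →L[ℂ] K) with hV
  have uV : ∀ x, (u : K →L[ℂ] K) (V x) = x := fun x => by
    have := u.mul_inv
    exact congrArg (fun T : K →L[ℂ] K => T x) this
  have Vu : ∀ x, V ((u : K →L[ℂ] K) x) = x := fun x => by
    have := u.inv_mul
    exact congrArg (fun T : K →L[ℂ] K => T x) this
  have RV : ∀ x, R (V x) = V (R x) := fun x => by
    rw [← Vu (R (V x))]
    congr 1
    rw [hu1, ← map_smul, ← map_add, ← hu1, uV]
  refine ⟨R ∘L V, fun x => ?_, fun x => ?_⟩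
  · obtain ⟨hd, he⟩ := hR1 (V x)
    refine ⟨hd, ?_⟩
    have e : w • (R (V x)) - S ⟨R (V x), hd⟩
        = (z • R (V x) - S ⟨R (V x), hd⟩) + (w - z) • R (V x) := by module
    have := uV x
    rw [hu1] at this
    simp only [ContinuousLinearMap.comp_apply]
    rw [e, he, this]
  · simp only [ContinuousLinearMap.comp_apply]
    rw [RV]
    have e : w • (x : K) - S x = (z • (x : K) - S x) + (w - z) • (x : K) := by module
    rw [e, map_add, hR2, map_smul, ← hu1, Vu]

lemma conj_norm {C : K → K} (hC : IsConjugation C) (x : K) : ‖C x‖ = ‖x‖ := by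
  have := hC.inner_map x x
  rw [inner_self_eq_norm_sq_to_K, inner_self_eq_norm_sq_to_K] at this
  have h2 : ‖C x‖ ^ 2 = ‖x‖ ^ 2 := by
    simp only [map_pow, Complex.coe_algebraMap, Complex.conj_ofReal] at this
    exact_mod_cast this
  exact (sq_eq_sq₀ (norm_nonneg _) (norm_nonneg _)).1 h2

/-- `C T C` as a bounded operator -/
def conjOp {C : K → K} (hC : IsConjugation C) (T : K →L[ℂ] K) : K →L[ℂ] K :=
  LinearMap.mkContinuous
    { toFun := fun x => C (T (C x))
      map_add' := fun x y => by simp [hC.map_add]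
      map_smul' := fun a x => by simp [hC.map_smul] } ‖T‖
    (fun x => by
      change ‖C (T (C x))‖ ≤ _
      rw [conj_norm hC, ← conj_norm hC x]
      exact T.le_opNorm _)

lemma conjOp_apply {C : K → K} (hC : IsConjugation C) (T : K →L[ℂ] K) (x : K) :
    conjOp hC T x = C (T (C x)) := rfl

lemma conj_inner_left {C : K → K} (hC : IsConjugation C) (x y : K) :
    ⟪x, C y⟫_ℂ = conj ⟪C x, y⟫_ℂ := by
  rw [← hC.inner_map, hC.invol]

lemma conj_inner_right {C : K → K} (hC : IsConjugation C) (x y : K) :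
    ⟪C x, y⟫_ℂ = conj ⟪x, C y⟫_ℂ := by
  rw [← hC.inner_map, hC.invol]

lemma meas_conj {A : Set ℂ} (hA : MeasurableSet A) :
    MeasurableSet ((fun z : ℂ => conj z) ⁻¹' A) :=
  Complex.continuous_conj.measurable hA

lemma Spec.conj {C : K → K} (hC : IsConjugation C) (h : Spec S E μ)
    (hCdom : ∀ ξ : K, ξ ∈ S.domain ↔ C ξ ∈ S.domain)
    (hCS : ∀ (ξ : K) (h : ξ ∈ S.domain) (h' : C ξ ∈ S.domain),
      C (S ⟨C ξ, h'⟩) = S ⟨ξ, h⟩) :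
    Spec S (fun A => conjOp hC (E ((fun z : ℂ => conj z) ⁻¹' A)))
      (fun ξ => (μ (C ξ)).map (fun z => conj z)) where
  sa A hA := by
    rw [ContinuousLinearMap.isSelfAdjoint_iff_isSymmetric]
    intro x y
    simp only [ContinuousLinearMap.coe_coe, conjOp_apply]
    rw [conj_inner_right hC _ y, conj_inner_left hC x, sa_inner (h.sa _ (meas_conj hA))]
  univ := by
    ext x
    simp [conjOp_apply, h.univ, hC.invol]
  inter A B hA hB := by
    ext x
    simp [conjOp_apply, h.inter _ _ (meas_conj hA) (meas_conj hB), hC.invol]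
  add ξ η A hA hd := by
    simp only [conjOp_apply, conj_inner_left hC, Set.preimage_iUnion]
    exact Complex.hasSum_conj.2 (by
      simpa using h.add (C ξ) (C η) (fun n => (fun z : ℂ => (starRingEnd ℂ) z) ⁻¹' (A n))
        (fun n => meas_conj (hA n)) (fun i j hij => (hd hij).preimage _))
  meas ξ A hA := by
    rw [Measure.map_apply Complex.continuous_conj.measurable hA, h.meas _ _ (meas_conj hA)]
    simp only [conjOp_apply, conj_inner_left hC]
    rw [Complex.conj_re]
  dom ξ := by
    rw [hCdom, h.dom]
    unfold specDomain
    simp only [Set.mem_ofPred_eq]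
    rw [lintegral_map (by fun_prop) Complex.continuous_conj.measurable]
    simp
  form ξ η := by
    have e1 : ∀ v : K, ∫ z, z ∂((μ v).map (fun z => (starRingEnd ℂ) z))
        = (starRingEnd ℂ) (∫ z, z ∂(μ v)) := by
      intro v
      rw [integral_map Complex.continuous_conj.measurable.aemeasurable (by fun_prop), integral_conj]
    have hξ := (hCdom ξ).1 ξ.2
    have hη := (hCdom η).1 η.2
    have e2 := hCS ξ ξ.2 hξ
    have e3 : S ξ = C (S ⟨C ξ, hξ⟩) := e2.symm
    have hneg : ∀ v : K, C (-v) = - C v := fun v => by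
      have := hC.map_smul (-1) v
      simpa using this
    have f := h.form ⟨C ξ, hξ⟩ ⟨C η, hη⟩
    simp only at f
    rw [e3, conj_inner_left hC, f]
    unfold specInt
    simp only [e1, sub_eq_add_neg, hC.map_add, hneg, hC.map_smul, Complex.conj_I, neg_smul,
      neg_neg, map_mul, map_add, map_neg, map_inv₀, map_ofNat]
    ring
  dense := h.dense

lemma Spec.of {E : Set ℂ → K →L[ℂ] K} (hS : Dense (S.domain : Set K))
    (hE : IsSpectralMeasure (pmapSpectrum S) E μ)
    (hdom : ∀ ξ : K, ξ ∈ S.domain ↔ ξ ∈ specDomain μ (fun z => z))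
    (hSE : ∀ ξ η : S.domain, ⟪(η : K), S ξ⟫_ℂ = specInt μ (fun z => z) ξ η) :
    Spec S (fun A => E (A ∩ pmapSpectrum S)) μ := by
  have m𝔖 : MeasurableSet (pmapSpectrum S) := (isOpen_resolvent S).measurableSet
  refine ⟨fun A hA => hE.selfAdjoint _ (hA.inter m𝔖) Set.inter_subset_right, ?_, ?_, ?_, ?_, hdom,
    hSE, hS⟩
  · simp only [Set.univ_inter]; exact hE.univ
  · intro A B hA hB
    rw [← hE.inter _ _ (hA.inter m𝔖) (hB.inter m𝔖) Set.inter_subset_right Set.inter_subset_right]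
    congr 1
    ext w; simp; tauto
  · intro ξ η A hA hd
    simp only [Set.iUnion_inter]
    exact hE.countablyAdditive ξ η _ (fun n => (hA n).inter m𝔖) (fun n => Set.inter_subset_right)
      (fun i j hij => (hd hij).mono Set.inter_subset_left Set.inter_subset_left)
  · intro ξ A hA
    rw [← hE.measure_eq ξ _ (hA.inter m𝔖) Set.inter_subset_right]
    exact (measure_inter_conull (hE.measure_compl ξ)).symm

/-- folding map onto the closed upper half plane -/
def fold (z : ℂ) : ℂ := ⟨z.re, |z.im|⟩

lemma fold_cont : Continuous fold := by
  have : fold = fun z : ℂ => (z.re : ℂ) + ((|z.im| : ℝ) : ℂ) * Complex.I := by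
    ext z; exact (Complex.mk_eq_add_mul_I _ _)
  rw [this]
  fun_prop

lemma fold_conj (z : ℂ) : fold (conj z) = fold z := by
  simp [fold]

lemma fold_or (z : ℂ) : fold z = z ∨ fold z = conj z := by
  rcases abs_choice z.im with h | h
  · left; apply Complex.ext <;> simp [fold, h]
  · right; apply Complex.ext <;> simp [fold, h]

end SpecAux
end
/-- **uniqueness of the real spectral measure, unbounded case.**
Let `C` be a conjugation on `K` and `S` a closed densely defined normal operator commuting
with `C`; let `E` (with diagonal scalar measures `μ`) be the spectral measure of `S` on
`𝔖 = σ(S)`.  If `F` is a map on `Bor_E(𝔖)` whose values are self-adjoint idempotents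
commuting with `C`, with `F(∅) = 0`, `F(𝔖) = I`, `F(A ∩ B) = F(A)F(B)`, weakly countably
additive, such that `S(F(A)K ∩ D(S)) ⊆ F(A)K` and the restriction of `S` to `F(A)K` (with
domain `F(A)K ∩ D(S)`) has spectrum contained in `closure A`, then `F = E` on `Bor_E(𝔖)`. -/
theorem spectralMeasure_uniqueness_unbounded
    {K : Type*} [NormedAddCommGroup K] [InnerProductSpace ℂ K] [CompleteSpace K]
    {C : K → K} (hC : IsConjugation C) (S : K →ₗ.[ℂ] K) (hS : IsNormalPMap S)
    (hCdom : ∀ ξ : K, ξ ∈ S.domain ↔ C ξ ∈ S.domain)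
    (hCS : ∀ (ξ : K) (h : ξ ∈ S.domain) (h' : C ξ ∈ S.domain),
      C (S ⟨C ξ, h'⟩) = S ⟨ξ, h⟩)
    (E : Set ℂ → K →L[ℂ] K) (μ : K → Measure ℂ)
    (hE : IsSpectralMeasure (pmapSpectrum S) E μ)
    (hdom : ∀ ξ : K, ξ ∈ S.domain ↔ ξ ∈ specDomain μ (fun z => z))
    (hSE : ∀ ξ η : S.domain, ⟪(η : K), S ξ⟫_ℂ = specInt μ (fun z => z) ξ η)
    (F : Set ℂ → K →L[ℂ] K)
    (hFsa : ∀ A ∈ borE C (pmapSpectrum S) E, IsSelfAdjoint (F A))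
    (hFidem : ∀ A ∈ borE C (pmapSpectrum S) E, F A ∘L F A = F A)
    (hFflat : ∀ A ∈ borE C (pmapSpectrum S) E, ∀ ξ : K, C (F A (C ξ)) = F A ξ)
    (hFempty : F ∅ = 0) (hFuniv : F (pmapSpectrum S) = 1)
    (hFinter : ∀ A ∈ borE C (pmapSpectrum S) E, ∀ B ∈ borE C (pmapSpectrum S) E,
      F (A ∩ B) = F A ∘L F B)
    (hFadd : ∀ (ξ η : K) (A : ℕ → Set ℂ), (∀ n, A n ∈ borE C (pmapSpectrum S) E) →
      Pairwise (Function.onFun Disjoint A) →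
      HasSum (fun n => ⟪η, F (A n) ξ⟫_ℂ) ⟪η, F (⋃ n, A n) ξ⟫_ℂ)
    (hFSinv : ∀ A ∈ borE C (pmapSpectrum S) E, ∀ (x : K) (hx : x ∈ S.domain),
      F A x = x → F A (S ⟨x, hx⟩) = S ⟨x, hx⟩)
    (hFspec : ∀ A ∈ borE C (pmapSpectrum S) E, ∀ z₀ : ℂ, z₀ ∉ closure A →
      ∀ y : K, F A y = y →
        ∃! x : S.domain, F A (x : K) = (x : K) ∧ z₀ • (x : K) - S x = y) :
    ∀ A ∈ borE C (pmapSpectrum S) E, F A = E A := by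
  classical
  set 𝔖 := pmapSpectrum S with h𝔖
  have m𝔖 : MeasurableSet 𝔖 := (SpecAux.isOpen_resolvent S).measurableSet
  have h := SpecAux.Spec.of hS.1 hE hdom hSE
  have hc := h.conj hC hCdom hCS
  -- conjugation symmetry of `E`
  have hsym : ∀ A : Set ℂ, MeasurableSet A → ∀ ξ,
      C (E (((fun z : ℂ => conj z) ⁻¹' A) ∩ 𝔖) (C ξ)) = E (A ∩ 𝔖) ξ := by
    intro A hA ξ
    have := h.uniq hc hA
    exact (congrArg (fun T : K →L[ℂ] K => T ξ) this).symm
  have idF : ∀ A ∈ borE C 𝔖 E, ∀ x, F A (F A x) = F A x := fun A hA x =>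
    congrArg (fun T : K →L[ℂ] K => T x) (hFidem A hA)
  -- key inequality
  have key : ∀ A ∈ borE C 𝔖 E, ∀ s : Set ℂ, IsClosed s → A = s ∩ 𝔖 → ∀ x,
      ‖F A x‖ ^ 2 ≤ ‖E A x‖ ^ 2 := by
    intro A hA s hs hAs x
    have hEF : ∀ v, E A (F A v) = F A v := by
      intro v
      rw [hAs]
      refine h.local_spec hs fun z hz => ?_
      have hz' : z ∉ closure A := fun hh => hz
        (closure_minimal (hAs ▸ Set.inter_subset_left) hs hh)
      obtain ⟨f, ⟨_, hf⟩, _⟩ := hFspec A hA z hz' (F A v) (idF A hA v)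
      exact ⟨f, hAs ▸ hf⟩
    have hFE : F A x = F A (E A x) := by
      refine ext_inner_left ℂ fun v => ?_
      rw [← SpecAux.sa_inner (hFsa A hA), ← SpecAux.sa_inner (hFsa A hA),
        ← SpecAux.sa_inner (hE.selfAdjoint A hA.1 hA.2.1), hEF]
    have : ‖F A x‖ ≤ ‖E A x‖ := by
      rw [hFE]; exact SpecAux.proj_norm_le (hFsa A hA) (idF A hA) _
    gcongr
  -- symmetric sets belong to `Bor_E`
  have hq : ∀ s : Set ℂ, MeasurableSet s → SpecAux.fold ⁻¹' s ∩ 𝔖 ∈ borE C 𝔖 E := by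
    intro s hs
    have mq : MeasurableSet (SpecAux.fold ⁻¹' s) := SpecAux.fold_cont.measurable hs
    refine ⟨mq.inter m𝔖, Set.inter_subset_right, fun ξ => ?_⟩
    have := hsym _ mq ξ
    rwa [← Set.preimage_comp, show SpecAux.fold ∘ (fun z : ℂ => conj z) = SpecAux.fold from
      funext SpecAux.fold_conj] at this
  have step1 : ∀ s : Set ℂ, MeasurableSet s →
      F (SpecAux.fold ⁻¹' s ∩ 𝔖) = E (SpecAux.fold ⁻¹' s ∩ 𝔖) := by
    intro s hs
    have mq : ∀ {s : Set ℂ}, MeasurableSet s → MeasurableSet (SpecAux.fold ⁻¹' s) :=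
      fun hs => SpecAux.fold_cont.measurable hs
    refine SpecAux.proj_ext (hFsa _ (hq s hs)) (idF _ (hq s hs)) (h.sa _ (mq hs)) (h.idem (mq hs))
      fun x => ?_
    obtain ⟨ν, hν⟩ := SpecAux.exists_measure (fun s => F (SpecAux.fold ⁻¹' s ∩ 𝔖))
      (fun s hs => hFsa _ (hq s hs)) (fun s hs => idF _ (hq s hs)) (by simp [hFempty])
      (fun ξ η A hA hd => by
        simp only [Set.preimage_iUnion, Set.iUnion_inter]
        exact hFadd ξ η _ (fun n => hq _ (hA n)) (fun i j hij =>
          ((hd hij).preimage _).mono Set.inter_subset_left Set.inter_subset_left)) x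
    set ρ := (μ x).map SpecAux.fold with hρd
    have := h.fin x
    have hρ : ∀ s, MeasurableSet s → ρ s = ENNReal.ofReal (‖E (SpecAux.fold ⁻¹' s ∩ 𝔖) x‖ ^ 2) := by
      intro s hs
      rw [hρd, Measure.map_apply SpecAux.fold_cont.measurable hs, h.mu_eq (mq hs)]
    have hνu : ν Set.univ = ENNReal.ofReal (‖x‖ ^ 2) := by
      rw [hν _ MeasurableSet.univ, Set.preimage_univ, Set.univ_inter, hFuniv]; rfl
    have hρu : ρ Set.univ = ENNReal.ofReal (‖x‖ ^ 2) := by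
      rw [hρ _ MeasurableSet.univ, Set.preimage_univ, Set.univ_inter, hE.univ]; rfl
    have : IsFiniteMeasure ν := ⟨by rw [hνu]; exact ENNReal.ofReal_lt_top⟩
    have : IsFiniteMeasure ρ := ⟨by rw [hρu]; exact ENNReal.ofReal_lt_top⟩
    have hle : ∀ s, MeasurableSet s → ν s ≤ ρ s := by
      intro s hs
      rw [hs.measure_eq_iSup_isClosed_of_ne_top (measure_ne_top ν s)]
      refine iSup₂_le fun t hts => iSup_le fun ht => ?_
      refine le_trans ?_ (measure_mono hts)
      rw [hν t ht.measurableSet, hρ t ht.measurableSet]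
      exact ENNReal.ofReal_le_ofReal (key _ (hq t ht.measurableSet) _
        (ht.preimage SpecAux.fold_cont) rfl x)
    have heq : ν s = ρ s := by
      refine le_antisymm (hle s hs) ?_
      have h1 := hle _ hs.compl
      have h2 := measure_add_measure_compl (μ := ν) hs
      have h3 := measure_add_measure_compl (μ := ρ) hs
      rw [hνu, ← hρu, ← h3] at h2
      have : ρ s + ρ sᶜ ≤ ν s + ρ sᶜ := by rw [← h2]; gcongr
      exact (ENNReal.add_le_add_iff_right (measure_ne_top ρ _)).1 this
    rw [hν s hs, hρ s hs] at heq
    exact (ENNReal.ofReal_eq_ofReal_iff (by positivity) (by positivity)).1 heq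
  -- null sets
  have hC0 : C 0 = 0 := by simpa using hC.map_smul 0 0
  have hnull : ∀ N : Set ℂ, MeasurableSet N → N ⊆ 𝔖 → E N = 0 → F N = 0 := by
    intro N mN hN𝔖 hN0
    have hsub : ∀ s, MeasurableSet s → E (N ∩ s) = 0 := by
      intro s hs
      have e : N ∩ s = (N ∩ s) ∩ N := by ext w; simp; tauto
      rw [e, hE.inter _ _ (mN.inter hs) mN (Set.inter_subset_left.trans hN𝔖) hN𝔖, hN0]
      simp
    have hNs : ∀ s, MeasurableSet s → N ∩ s ∈ borE C 𝔖 E := fun s hs =>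
      ⟨mN.inter hs, Set.inter_subset_left.trans hN𝔖, fun ξ => by rw [hsub s hs]; simp [hC0]⟩
    ext x
    obtain ⟨ν, hν⟩ := SpecAux.exists_measure (fun s => F (N ∩ s))
      (fun s hs => hFsa _ (hNs s hs)) (fun s hs => idF _ (hNs s hs)) (by simp [hFempty])
      (fun ξ η A hA hd => by
        simp only [Set.inter_iUnion]
        exact hFadd ξ η _ (fun n => hNs _ (hA n)) (fun i j hij =>
          (hd hij).mono Set.inter_subset_right Set.inter_subset_right)) x
    have : IsFiniteMeasure ν :=
      ⟨by rw [hν _ MeasurableSet.univ]; exact ENNReal.ofReal_lt_top⟩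
    have h0 : ν N = 0 := by
      rw [mN.measure_eq_iSup_isClosed_of_ne_top (measure_ne_top ν N)]
      refine le_antisymm (iSup₂_le fun t hts => iSup_le fun ht => ?_) bot_le
      rw [hν t ht.measurableSet]
      have hb := hNs t ht.measurableSet
      have := key _ hb t ht (by
        ext w; constructor
        · exact fun hw => ⟨hw.2, hN𝔖 hw.1⟩
        · exact fun hw => ⟨hts hw.1, hw.1⟩) x
      rw [hsub t ht.measurableSet] at this
      exact (ENNReal.ofReal_eq_zero.2 (by simpa using this)).le
    rw [hν N mN, Set.inter_self] at h0
    have h1 := le_antisymm (ENNReal.ofReal_eq_zero.1 h0) (by positivity)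
    simpa using h1
  -- general sets
  intro A hA
  obtain ⟨mA, hA𝔖, hAC⟩ := hA
  set A' : Set ℂ := (fun z : ℂ => conj z) ⁻¹' A with hA'
  have mA' : MeasurableSet A' := SpecAux.meas_conj mA
  have hAA : A ∩ 𝔖 = A := Set.inter_eq_left.2 hA𝔖
  have hEA' : E (A' ∩ 𝔖) = E A := by
    ext ξ
    have := hsym A mA (C ξ)
    rw [hAA, hC.invol] at this
    rw [← hAC, ← this, hC.invol]
  have hE0 : E (A ∩ A') = E A := by
    have e : A ∩ A' = A ∩ (A' ∩ 𝔖) := by rw [Set.inter_comm A' 𝔖, ← Set.inter_assoc, hAA]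
    rw [e, hE.inter _ _ mA (mA'.inter m𝔖) hA𝔖 Set.inter_subset_right, hEA',
      ← hE.inter _ _ mA mA hA𝔖 hA𝔖, Set.inter_self]
  have hfold : SpecAux.fold ⁻¹' (A ∩ A') ∩ 𝔖 = A ∩ A' := by
    ext w
    simp only [Set.mem_inter_iff, Set.mem_preimage, hA']
    rcases SpecAux.fold_or w with hw | hw <;> rw [hw]
    · exact ⟨fun hh => hh.1, fun hh => ⟨hh, hA𝔖 hh.1⟩⟩
    · rw [Complex.conj_conj]
      exact ⟨fun hh => hh.1.symm, fun hh => ⟨hh.symm, hA𝔖 hh.1⟩⟩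
  have hF0 : F (A ∩ A') = E (A ∩ A') := by
    have := step1 (A ∩ A') (mA.inter mA')
    rwa [hfold] at this
  have b0 : A ∩ A' ∈ borE C 𝔖 E := hfold ▸ hq _ (mA.inter mA')
  have hEN : E (A \ A') = 0 := by
    ext x
    have hd := hE.inter (A \ A') A (mA.diff mA') mA (Set.sdiff_subset.trans hA𝔖) hA𝔖
    rw [← hE0, ← hE.inter _ _ (mA.diff mA') (mA.inter mA') (Set.sdiff_subset.trans hA𝔖)
      (Set.inter_subset_left.trans hA𝔖), Set.inter_eq_left.2 Set.sdiff_subset] at hd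
    have e : (A \ A') ∩ (A ∩ A') = ∅ := by ext w; simp; tauto
    rw [hd, e, hE.empty]
  have hFN : F (A \ A') = 0 := hnull _ (mA.diff mA') (Set.sdiff_subset.trans hA𝔖) hEN
  have bN : A \ A' ∈ borE C 𝔖 E :=
    ⟨mA.diff mA', Set.sdiff_subset.trans hA𝔖, fun ξ => by rw [hEN]; simp [hC0]⟩
  have bE : (∅ : Set ℂ) ∈ borE C 𝔖 E :=
    ⟨MeasurableSet.empty, Set.empty_subset _, fun ξ => by rw [hE.empty]; simp [hC0]⟩
  rw [← hE0, ← hF0]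
  let B : ℕ → Set ℂ := fun n => if n = 0 then A ∩ A' else if n = 1 then A \ A' else ∅
  have hB : ⋃ n, B n = A := by
    ext w
    rw [Set.mem_iUnion]
    constructor
    · rintro ⟨n, hn⟩
      simp only [B] at hn
      split_ifs at hn
      · exact hn.1
      · exact hn.1
      · exact hn.elim
    · intro hw
      by_cases hw' : w ∈ A'
      · exact ⟨0, hw, hw'⟩
      · exact ⟨1, hw, hw'⟩
  ext ξ
  refine ext_inner_left ℂ fun η => ?_
  have hsum := hFadd ξ η B (fun n => by
    simp only [B]; split_ifs
    · exact b0
    · exact bN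
    · exact bE) (by
    intro i j hij
    rw [Function.onFun, Set.disjoint_left]
    intro w hi hj
    simp only [B] at hi hj
    split_ifs at hi hj <;> first | omega | exact hi.2 hj.2 | exact hj.2 hi.2 | exact hi.elim | exact hj.elim)
  rw [hB] at hsum
  have h2 := hasSum_single (f := fun n => ⟪η, F (B n) ξ⟫_ℂ) 0 (fun n hn => by
    simp only [B, if_neg hn]
    split_ifs
    · rw [hFN]; simp
    · rw [hFempty]; simp)
  exact hsum.unique h2
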